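/- Let 0 ≤ s ≤ 2 and h = π/N ∈ (0,1]. There is a constant C, independent of h, such that for every f : 𝕋_h → ℝ one has (Σ_{k∈(𝕋_h)*} |𝓕(𝓛_h f)(k) − 𝓕_h f(k)|²)^{1/2} ≤ C·h^s·‖f‖_{H^s(𝕋_h)}, where 𝓕(𝓛_h f)(k) denotes the k-th Fourier coefficient on 𝕋 of the interpolated function 𝓛_h f. -/

import Mathlib

/-!
On the Fourier side, linear interpolation acts as a multiplier: on the window, and in fact for
every `k`, `𝓕(𝓛_h f)(k) = m(hk) 𝓕_h f(k)` with `m(θ) = ∫₀¹ 2(1 - t) cos(θt) dt`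
(`tF_interp`). To see this, the integral over `[-π, π]` is split into mesh cells. On the cell
`[hn, hn + h)` the interpolant is a combination of the two endpoint values weighted by `1 - t`
and `t`, and a cyclic shift of the sum over `n` attributes both contributions to the same lattice
point, with total weight the tent function, whose transform is `m`.

Since `∫₀¹ 2(1 - t) dt = 1`, the difference `m(θ) - 1` is the integral of
`2(1 - t)(cos(θt) - 1)`, hence bounded both by `θ²` and by `4`. For `0 ≤ s ≤ 2` this gives
`|m(θ) - 1| ≤ 4|θ|^s` (`abs_tentSymb_sub_one_le_rpow`). With `θ = hk` and
`|k|^{2s} ≤ (1 + k²)^s`, squaring and summing over the window yields the claim with `C = 4`.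
-/

open scoped Real BigOperators ENNReal NNReal
open MeasureTheory

noncomputable section

namespace FPU

/-- `e^{ix}`. -/
def eI (x : ℝ) : ℂ := Complex.exp (Complex.I * x)

/-- Mesh size `h = π / N`. -/
def msh (N : ℕ) : ℝ := Real.pi / N

/-- Frequency/index set `{-N, …, N-1}` of `𝕋_h` (identified with `(𝕋_h)*`). -/
def dual (N : ℕ) : Finset ℤ := Finset.Icc (-(N : ℤ)) ((N : ℤ) - 1)

/-- Reduction of an integer into `{-N, …, N-1}` modulo `2N`. -/
def red (N : ℕ) (m : ℤ) : ℤ := (m + N) % (2 * N) - N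

/-- Complexification of a real lattice function. -/
def cf (f : ℤ → ℝ) : ℤ → ℂ := fun n => (f n : ℂ)

/-- Discrete Fourier coefficient `𝓕_h f (k)` on `𝕋_h`. -/
def dF (N : ℕ) (f : ℤ → ℂ) (k : ℤ) : ℂ :=
  ((msh N / Real.sqrt (2 * Real.pi) : ℝ) : ℂ) *
    ∑ n ∈ dual N, f n * eI (-(msh N * n * k))

/-- `L²(𝕋_h)` norm. -/
def L2h (N : ℕ) (f : ℤ → ℂ) : ℝ :=
  Real.sqrt (msh N * ∑ n ∈ dual N, ‖f n‖ ^ 2)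

/-- `H^s(𝕋_h)` norm. -/
def Hs (N : ℕ) (s : ℝ) (f : ℤ → ℂ) : ℝ :=
  Real.sqrt (∑ k ∈ dual N, (1 + (k : ℝ) ^ 2) ^ s * ‖dF N f k‖ ^ 2)

/-- `ℍ^s(𝕋_h)` norm of a pair. -/
def HsPair (N : ℕ) (s : ℝ) (f g : ℤ → ℂ) : ℝ :=
  Real.sqrt (Hs N s f ^ 2 + Hs N s g ^ 2)

/-- Fourier multiplier on `𝕋_h` with symbol `m`. -/
def mult (N : ℕ) (m : ℤ → ℂ) (f : ℤ → ℂ) : ℤ → ℂ := fun n =>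
  ((1 / Real.sqrt (2 * Real.pi) : ℝ) : ℂ) *
    ∑ k ∈ dual N, m k * dF N f k * eI (msh N * n * k)

/-- Symbol of `∇_h`. -/
def gradSymb (N : ℕ) (k : ℤ) : ℂ :=
  2 * Complex.I / ((msh N : ℝ) : ℂ) * ((Real.sin (msh N * k / 2) : ℝ) : ℂ)

/-- `∇_h`. -/
def gradh (N : ℕ) : (ℤ → ℂ) → ℤ → ℂ := mult N (gradSymb N)

/-- `∇_h⁻¹` (vanishing at frequency `0`). -/
def gradhInv (N : ℕ) : (ℤ → ℂ) → ℤ → ℂ :=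
  mult N fun k => if k = 0 then 0 else (gradSymb N k)⁻¹

/-- The FPU dispersion `s_h(k) = (1/h²)(k - (2/h)sin(hk/2))`. -/
def sh (N : ℕ) (k : ℤ) : ℝ :=
  (1 / msh N ^ 2) * (k - (2 / msh N) * Real.sin (msh N * k / 2))

/-- Linear FPU propagator `S_h^σ(t)`, the multiplier with symbol `e^{iσt·s_h(k)}`. -/
def Sh (N : ℕ) (σ t : ℝ) : (ℤ → ℂ) → ℤ → ℂ :=
  mult N fun k => eI (σ * t * sh N k)

/-- `e^{σc∂_h}`, the multiplier with symbol `e^{iσck}`. -/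
def expDh (N : ℕ) (c : ℝ) : (ℤ → ℂ) → ℤ → ℂ :=
  mult N fun k => eI (c * k)

/-- Coupled FPU integral equation (component with sign `σ`, the other component is `w`). -/
def coupledEq (N : ℕ) (σ T : ℝ) (u0 : ℤ → ℂ) (u w : ℝ → ℤ → ℂ) : Prop :=
  ∀ t ∈ Set.Icc (-T) T, ∀ n : ℤ,
    u t n = Sh N σ t u0 n - (σ : ℂ) / 4 *
      ∫ t' in (0:ℝ)..t,
        Sh N σ (t - t')
          (gradh N (fun m =>
            (u t' m + expDh N (σ * (2 * t' / msh N ^ 2)) (w t') m) ^ 2)) n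

/-- Decoupled FPU integral equation with sign `σ`. -/
def decoupledEq (N : ℕ) (σ T : ℝ) (u0 : ℤ → ℂ) (v : ℝ → ℤ → ℂ) : Prop :=
  ∀ t ∈ Set.Icc (-T) T, ∀ n : ℤ,
    v t n = Sh N σ t u0 n - (σ : ℂ) / 4 *
      ∫ t' in (0:ℝ)..t, Sh N σ (t - t') (gradh N (fun m => (v t' m) ^ 2)) n

/-- Fourier coefficient on `𝕋 = ℝ/2πℤ`. -/
def tF (f : ℝ → ℂ) (k : ℤ) : ℂ :=
  ((1 / Real.sqrt (2 * Real.pi) : ℝ) : ℂ) *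
    ∫ x in (-Real.pi)..Real.pi, f x * eI (-(x * k))

/-- Fourier multiplier on `𝕋`. -/
def tmult (m : ℤ → ℂ) (f : ℝ → ℂ) : ℝ → ℂ := fun x =>
  ((1 / Real.sqrt (2 * Real.pi) : ℝ) : ℂ) * ∑' k : ℤ, m k * tF f k * eI (x * k)

/-- Airy propagator `S^σ(t)`, multiplier with symbol `e^{iσtk³/24}`. -/
def airy (σ t : ℝ) : (ℝ → ℂ) → ℝ → ℂ :=
  tmult fun k => eI (σ * t * (k : ℝ) ^ 3 / 24)

/-- `∂_x` as a Fourier multiplier on `𝕋`. -/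
def tderiv : (ℝ → ℂ) → ℝ → ℂ := tmult fun k => Complex.I * (k : ℂ)

/-- `L²(𝕋)` norm (computed on the Fourier side). -/
def L2T (f : ℝ → ℂ) : ℝ≥0∞ :=
  (∑' k : ℤ, ENNReal.ofReal (‖tF f k‖ ^ 2)) ^ (1/2 : ℝ)

/-- `H^s(𝕋)` norm. -/
def HsT (s : ℝ) (f : ℝ → ℂ) : ℝ≥0∞ :=
  (∑' k : ℤ, ENNReal.ofReal ((1 + (k : ℝ) ^ 2) ^ s * ‖tF f k‖ ^ 2)) ^ (1/2 : ℝ)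

/-- `L²(𝕋)` norm of the sharp frequency projection onto the set `K`. -/
def L2Tproj (K : Set ℤ) (f : ℝ → ℂ) : ℝ≥0∞ :=
  (∑' k : ℤ, ENNReal.ofReal (K.indicator (fun j => ‖tF f j‖ ^ 2) k)) ^ (1/2 : ℝ)

/-- Linear interpolation `𝓛_h` of a lattice function, as a function on `𝕋` (2π-periodic). -/
def interp (N : ℕ) (f : ℤ → ℂ) : ℝ → ℂ := fun x =>
  f (red N ⌊x / msh N⌋) +
    (f (red N (⌊x / msh N⌋ + 1)) - f (red N ⌊x / msh N⌋)) *
      (((x - msh N * ⌊x / msh N⌋) / msh N : ℝ) : ℂ)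

/-- KdV integral equation with sign `σ`. -/
def kdvEq (σ T : ℝ) (w0 : ℝ → ℂ) (w : ℝ → ℝ → ℂ) : Prop :=
  ∀ t ∈ Set.Icc (-T) T, ∀ x : ℝ,
    w t x = airy σ t w0 x - (σ : ℂ) / 4 *
      ∫ t' in (0:ℝ)..t, airy σ (t - t') (tderiv (fun y => (w t' y) ^ 2)) x

/-- Continuity in `H^s(𝕋)` on `[-T,T]`, together with membership in `H^s`. -/
def contHsT (s T : ℝ) (w : ℝ → ℝ → ℂ) : Prop :=
  ∀ t₀ ∈ Set.Icc (-T) T, HsT s (w t₀) < ⊤ ∧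
    ∀ ε : ℝ, 0 < ε → ∃ δ : ℝ, 0 < δ ∧ ∀ t ∈ Set.Icc (-T) T,
      |t - t₀| < δ → HsT s (fun x => w t x - w t₀ x) < ENNReal.ofReal ε

/-- Japanese bracket `⟨x⟩`. -/
def jap (x : ℝ) : ℝ := Real.sqrt (1 + x ^ 2)

/-- Space-time Fourier transform on `ℝ × 𝕋_h`. -/
def stF (N : ℕ) (u : ℝ → ℤ → ℂ) (τ : ℝ) (k : ℤ) : ℂ :=
  ((msh N / (2 * Real.pi) : ℝ) : ℂ) *
    ∑ n ∈ dual N, ∫ t : ℝ, eI (-(t * τ)) * eI (-(msh N * n * k)) * u t n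

/-- Bourgain norm `X^{s,b}_{h,σ}` (with sign `σ = ±1`). -/
def Xnorm (N : ℕ) (σ s b : ℝ) (u : ℝ → ℤ → ℂ) : ℝ≥0∞ :=
  (∑ k ∈ dual N, ∫⁻ τ : ℝ, ENNReal.ofReal
      (jap (k : ℝ) ^ (2 * s) * jap (τ - σ * sh N k) ^ (2 * b) * ‖stF N u τ k‖ ^ 2)) ^ (1/2 : ℝ)

/-- `Z^s_{h,σ}` norm. -/
def Znorm (N : ℕ) (σ s : ℝ) (u : ℝ → ℤ → ℂ) : ℝ≥0∞ :=
  Xnorm N σ s (-(1/2)) u +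
    (∑ k ∈ dual N, (∫⁻ τ : ℝ, ENNReal.ofReal
        (jap (k : ℝ) ^ s * (jap (τ - σ * sh N k))⁻¹ * ‖stF N u τ k‖)) ^ 2) ^ (1/2 : ℝ)

/-- `Y^s_{h,σ}` norm. -/
def Ynorm (N : ℕ) (σ s : ℝ) (u : ℝ → ℤ → ℂ) : ℝ≥0∞ :=
  Xnorm N σ s (1/2) u +
    (∑ k ∈ dual N, (∫⁻ τ : ℝ, ENNReal.ofReal
        (jap (k : ℝ) ^ s * ‖stF N u τ k‖)) ^ 2) ^ (1/2 : ℝ)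

/-- Time restricted norm `Y^{s,T}_{h,σ}` (infimum over extensions). -/
def YnormT (N : ℕ) (σ s T : ℝ) (u : ℝ → ℤ → ℂ) : ℝ≥0∞ :=
  ⨅ g : {g : ℝ → ℤ → ℂ // ∀ t ∈ Set.Icc (-T) T, ∀ n : ℤ, g t n = u t n},
    Ynorm N σ s g.1

/-- `L⁴(ℝ × 𝕋_h)` norm. -/
def L4st (N : ℕ) (u : ℝ → ℤ → ℂ) : ℝ≥0∞ :=
  (∫⁻ t : ℝ, ENNReal.ofReal (msh N * ∑ n ∈ dual N, ‖u t n‖ ^ 4)) ^ (1/4 : ℝ)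

/-- KdV resonance `Ψ²(k,k₁,k₂) = -(1/8)kk₁k₂`. -/
def Psi2 (k k₁ k₂ : ℤ) : ℝ := -(1/8 : ℝ) * (k : ℝ) * (k₁ : ℝ) * (k₂ : ℝ)

/-- KdV cubic resonance `Ψ³ = -(1/8)(a+b)(b+c)(a+c)`. -/
def Psi3 (a b c : ℤ) : ℝ :=
  -(1/8 : ℝ) * (((a + b : ℤ) : ℝ) * ((b + c : ℤ) : ℝ) * ((a + c : ℤ) : ℝ))

/-- KdV quartic resonance. -/
def Psi4 (k₁ k₂ k₃ k₄ : ℤ) : ℝ := Psi3 (k₁ + k₂) k₃ k₄ + Psi2 (k₁ + k₂) k₁ k₂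

/-- FPU resonance `Φ_h²`. -/
def Phi2 (h : ℝ) (k k₁ k₂ : ℤ) : ℝ :=
  -(8 / h ^ 3) *
    (Real.sin (h * k₁ / 4) * Real.sin (h * k₂ / 4) * Real.sin (h * k / 4))

/-- FPU cubic resonance `Φ_h³`. -/
def Phi3 (h : ℝ) (a b c : ℤ) : ℝ :=
  -(8 / h ^ 3) *
    (Real.sin (h * (a + b) / 4) * Real.sin (h * (b + c) / 4) * Real.sin (h * (a + c) / 4))

/-- FPU quartic resonance `Φ_h⁴`. -/
def Phi4 (h : ℝ) (k₁ k₂ k₃ k₄ : ℤ) : ℝ :=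
  Phi3 h (k₁ + k₂) k₃ k₄ + Phi2 h (k₁ + k₂) k₁ k₂

/-- Decoupled FPU profile equation in Fourier variables (sign `σ`), on the time set `I`. -/
def fpuProfileEq (N : ℕ) (σ : ℝ) (u0 : ℤ → ℂ) (V : ℝ → ℤ → ℂ) (I : Set ℝ) : Prop :=
  ∀ t ∈ I, ∀ k ∈ dual N,
    dF N (V t) k = dF N u0 k -
      (σ : ℂ) * Complex.I / (2 * ((msh N : ℝ) : ℂ)) * ((Real.sin (msh N * k / 2) : ℝ) : ℂ) *
        ∫ t' in (0:ℝ)..t,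
          ∑ k₁ ∈ dual N,
            (if k₁ ≠ 0 ∧ k - k₁ ≠ 0 ∧ k - k₁ ∈ dual N then
              eI (σ * t' * Phi2 (msh N) k k₁ (k - k₁)) * dF N (V t') k₁ * dF N (V t') (k - k₁)
            else 0)

/-- KdV profile equation in Fourier variables (sign `σ`), on the time set `I`;
`W t k` denotes the `k`-th Fourier coefficient of the profile at time `t`. -/
def kdvProfileEq (σ : ℝ) (w0 : ℤ → ℂ) (W : ℝ → ℤ → ℂ) (I : Set ℝ) : Prop :=
  ∀ t ∈ I, ∀ k : ℤ,
    W t k = w0 k -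
      (σ : ℂ) * Complex.I * (k : ℂ) / 4 *
        ∫ t' in (0:ℝ)..t,
          ∑' k₁ : ℤ,
            (if k₁ ≠ 0 ∧ k - k₁ ≠ 0 then
              eI (σ * t' * Psi2 k k₁ (k - k₁)) * W t' k₁ * W t' (k - k₁)
            else 0)

/-- `H^s(𝕋)` norm of a Fourier coefficient sequence (extended-real valued). -/
def HsSeq (s : ℝ) (a : ℤ → ℂ) : ℝ≥0∞ :=
  (∑' k : ℤ, ENNReal.ofReal ((1 + (k : ℝ) ^ 2) ^ s * ‖a k‖ ^ 2)) ^ (1/2 : ℝ)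

/-- `H^s(𝕋)` norm of a Fourier coefficient sequence (real valued). -/
def HsSeqR (s : ℝ) (a : ℤ → ℂ) : ℝ :=
  Real.sqrt (∑' k : ℤ, (1 + (k : ℝ) ^ 2) ^ s * ‖a k‖ ^ 2)

/-- `ℓ²(ℤ)` norm of a Fourier coefficient sequence. -/
def l2R (a : ℤ → ℂ) : ℝ := Real.sqrt (∑' k : ℤ, ‖a k‖ ^ 2)

/-- `ℓ²` norm of the projection of a coefficient sequence to the frequency set `K`. -/
def l2projR (K : Set ℤ) (a : ℤ → ℂ) : ℝ :=
  Real.sqrt (∑' k : ℤ, K.indicator (fun j => ‖a j‖ ^ 2) k)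

/-- Periodic discrete Laplacian `Δ_h` on real lattice functions. -/
def lapR (N : ℕ) (f : ℤ → ℝ) (n : ℤ) : ℝ :=
  (f (red N (n + 1)) + f (red N (n - 1)) - 2 * f n) / msh N ^ 2

/-! ### The tent multiplier and its distance from `1` -/

theorem eI_add (x y : ℝ) : eI (x + y) = eI x * eI y := by
  simp only [eI, Complex.ofReal_add, mul_add, Complex.exp_add]

theorem eI_two_pi_mul_int (m : ℤ) : eI (2 * π * m) = 1 := by
  rw [eI, Complex.exp_eq_one_iff]
  exact ⟨m, by push_cast; ring⟩

theorem continuous_eI : Continuous eI := by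
  unfold eI; fun_prop

theorem eI_neg_add_eI (x : ℝ) : eI (-x) + eI x = ((2 * Real.cos x : ℝ) : ℂ) := by
  push_cast
  rw [Complex.cos]
  simp only [eI]
  push_cast
  rw [mul_comm Complex.I (-(x : ℂ)), mul_comm Complex.I (x : ℂ)]
  ring

/-- The interpolation multiplier `4 sin²(θ/2) / θ²` at `θ = hk`, written as the cosine transform
of the tent function; in this form `θ = 0` needs no separate treatment. -/
def tentSymb (θ : ℝ) : ℝ := ∫ t in (0 : ℝ)..1, 2 * (1 - t) * Real.cos (θ * t)

theorem tentSymb_sub_one (θ : ℝ) :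
    tentSymb θ - 1 = ∫ t in (0 : ℝ)..1, 2 * (1 - t) * (Real.cos (θ * t) - 1) := by
  have h1 : ∫ t in (0 : ℝ)..1, 2 * (1 - t) = 1 := by
    rw [intervalIntegral.integral_const_mul, intervalIntegral.integral_sub (by simp) (by simp)]
    norm_num
  simp only [mul_sub_one]
  rw [intervalIntegral.integral_sub, h1, tentSymb]
  all_goals exact Continuous.intervalIntegrable (by fun_prop) _ _

theorem abs_tentSymb_sub_one_le (θ C : ℝ)
    (hC : ∀ t ∈ Set.Icc (0 : ℝ) 1, 2 * (1 - t) * (1 - Real.cos (θ * t)) ≤ C) :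
    |tentSymb θ - 1| ≤ C := by
  rw [tentSymb_sub_one, ← Real.norm_eq_abs]
  have := intervalIntegral.norm_integral_le_of_norm_le_const (a := 0) (b := 1) (C := C)
    (f := fun t : ℝ => 2 * (1 - t) * (Real.cos (θ * t) - 1)) (by
      intro t ht
      rw [Set.uIoc_of_le zero_le_one] at ht
      have h := hC t ⟨ht.1.le, ht.2⟩
      have hn : 0 ≤ 2 * (1 - t) * (1 - Real.cos (θ * t)) :=
        mul_nonneg (by linarith [ht.2]) (by linarith [Real.cos_le_one (θ * t)])
      rw [Real.norm_eq_abs, abs_le]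
      constructor <;> nlinarith)
  simpa using this

theorem abs_tentSymb_sub_one_le_four (θ : ℝ) : |tentSymb θ - 1| ≤ 4 := by
  refine abs_tentSymb_sub_one_le θ 4 fun t ht => ?_
  have h2 : 1 - Real.cos (θ * t) ≤ 2 := by linarith [Real.neg_one_le_cos (θ * t)]
  nlinarith [ht.1, ht.2]

theorem abs_tentSymb_sub_one_le_sq (θ : ℝ) : |tentSymb θ - 1| ≤ θ ^ 2 := by
  refine abs_tentSymb_sub_one_le θ _ fun t ht => ?_
  have h2 : 1 - Real.cos (θ * t) ≤ (θ * t) ^ 2 / 2 := by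
    linarith [Real.one_sub_sq_div_two_le_cos (x := θ * t)]
  have h3 : (1 - t) * t ^ 2 ≤ 1 :=
    mul_le_one₀ (by linarith [ht.1]) (sq_nonneg t) (pow_le_one₀ ht.1 ht.2)
  calc 2 * (1 - t) * (1 - Real.cos (θ * t)) ≤ 2 * (1 - t) * ((θ * t) ^ 2 / 2) :=
        mul_le_mul_of_nonneg_left h2 (by linarith [ht.2])
    _ = θ ^ 2 * ((1 - t) * t ^ 2) := by ring
    _ ≤ θ ^ 2 := mul_le_of_le_one_right (sq_nonneg θ) h3

/-- Interpolates between the quadratic bound for `|θ| ≤ 1` and the uniform bound for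
`|θ| ≥ 1`; the restriction `s ≤ 2` enters in the first range. -/
theorem abs_tentSymb_sub_one_le_rpow {s : ℝ} (hs0 : 0 ≤ s) (hs2 : s ≤ 2) (θ : ℝ) :
    |tentSymb θ - 1| ≤ 4 * |θ| ^ s := by
  rcases le_total |θ| 1 with h | h
  · refine (abs_tentSymb_sub_one_le_sq θ).trans ?_
    have h1 : θ ^ 2 ≤ |θ| ^ s := by
      rw [← sq_abs, ← Real.rpow_natCast]
      exact Real.rpow_le_rpow_of_exponent_ge_of_imp (abs_nonneg θ) h (by exact_mod_cast hs2)
        (fun _ h0 => by norm_num at h0)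
    have := Real.rpow_nonneg (abs_nonneg θ) s
    linarith
  · refine (abs_tentSymb_sub_one_le_four θ).trans ?_
    linarith [Real.one_le_rpow h hs0]

/-- The two half-tents, one from each endpoint of a mesh cell, add up to the full tent. -/
theorem half_tents_add (θ : ℝ) :
    (∫ t in (0 : ℝ)..1, ((1 - t : ℝ) : ℂ) * eI (-(θ * t))) +
      (∫ t in (0 : ℝ)..1, (t : ℂ) * eI (θ * (1 - t))) = (tentSymb θ : ℂ) := by
  have h := intervalIntegral.integral_comp_sub_left (a := 0) (b := 1)
    (fun t : ℝ => ((1 - t : ℝ) : ℂ) * eI (θ * t)) 1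
  simp only [sub_sub_cancel, sub_self, sub_zero] at h
  have c := continuous_eI
  rw [h, ← intervalIntegral.integral_add, tentSymb, ← intervalIntegral.integral_ofReal]
  · congr 1; ext t
    rw [← mul_add, eI_neg_add_eI]
    push_cast; ring
  all_goals exact Continuous.intervalIntegrable (by fun_prop) _ _

/-! ### Lattice sums over one period -/

theorem msh_pos {N : ℕ} (hN : 1 ≤ N) : 0 < msh N := by
  have : (0 : ℝ) < N := by exact_mod_cast hN
  exact div_pos Real.pi_pos this

theorem msh_mul {N : ℕ} (hN : 1 ≤ N) : msh N * N = π := by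
  have : (N : ℝ) ≠ 0 := by positivity
  exact div_mul_cancel₀ _ this

theorem red_eq_self {N : ℕ} {n : ℤ} (hn : n ∈ dual N) : red N n = n := by
  rw [dual, Finset.mem_Icc] at hn
  rw [red, Int.emod_eq_of_lt] <;> omega

theorem red_add_period (N : ℕ) (n : ℤ) : red N (n + 2 * N) = red N n := by
  rw [red, red, show n + 2 * N + N = n + N + 2 * (N : ℤ) by ring, Int.add_emod_right]

theorem sum_dual_eq_range (N : ℕ) (G : ℤ → ℂ) :
    ∑ n ∈ dual N, G n = ∑ j ∈ Finset.range (2 * N), G (j - N) := by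
  symm
  refine Finset.sum_bij (fun j _ => (j : ℤ) - N) ?_ ?_ ?_ ?_
  · intro j hj
    rw [Finset.mem_range] at hj
    rw [dual, Finset.mem_Icc]; omega
  · intro a _ b _ h; omega
  · intro b hb
    rw [dual, Finset.mem_Icc] at hb
    exact ⟨(b + N).toNat, by rw [Finset.mem_range]; omega, by omega⟩
  · intros; rfl

theorem sum_dual_shift {N : ℕ} {G : ℤ → ℂ} (hG : ∀ n, G (n + 2 * N) = G n) :
    ∑ n ∈ dual N, G (n + 1) = ∑ n ∈ dual N, G n := by
  rw [← sub_eq_zero, ← Finset.sum_sub_distrib, sum_dual_eq_range]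
  have h := Finset.sum_range_sub (fun j : ℕ => G ((j : ℤ) - N)) (2 * N)
  have e : ((2 * N : ℕ) : ℤ) - N = ((0 : ℕ) : ℤ) - N + 2 * N := by push_cast; ring
  rw [e, hG, sub_self] at h
  rw [← h]
  refine Finset.sum_congr rfl fun j _ => ?_
  congr 2; push_cast; ring

/-- The summand of `dF`, extended `2N`-periodically to all of `ℤ`. -/
def modeTerm (N : ℕ) (f : ℤ → ℂ) (k n : ℤ) : ℂ := f (red N n) * eI (-(msh N * n * k))

theorem modeTerm_add_period {N : ℕ} (hN : 1 ≤ N) (f : ℤ → ℂ) (k n : ℤ) :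
    modeTerm N f k (n + 2 * N) = modeTerm N f k n := by
  rw [modeTerm, modeTerm, red_add_period,
    show (-(msh N * ((n + 2 * N : ℤ) : ℝ) * k)) = -(msh N * n * k) + 2 * π * ((-k : ℤ) : ℝ) by
      rw [← msh_mul hN]; push_cast; ring, eI_add, eI_two_pi_mul_int, mul_one]

/-! ### Fourier coefficients of the interpolant -/

/-- The affine function which `interp` equals on the mesh cell `[hn, hn + h)`. -/
def cellAffine (N : ℕ) (f : ℤ → ℂ) (n : ℤ) (x : ℝ) : ℂ :=
  f (red N n) + (f (red N (n + 1)) - f (red N n)) * (((x - msh N * n) / msh N : ℝ) : ℂ)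

theorem interp_eq_cellAffine {N : ℕ} (hN : 1 ≤ N) (f : ℤ → ℂ) (n : ℤ) {x : ℝ}
    (hx : x ∈ Set.Ioo (msh N * n) (msh N * n + msh N)) : interp N f x = cellAffine N f n x := by
  have h := msh_pos hN
  have hfl : ⌊x / msh N⌋ = n := by
    rw [Int.floor_eq_iff, le_div_iff₀ h, div_lt_iff₀ h]
    constructor <;> nlinarith [hx.1, hx.2]
  simp only [interp, cellAffine, hfl]

theorem continuous_cellAffine (N : ℕ) (f : ℤ → ℂ) (n : ℤ) : Continuous (cellAffine N f n) := by
  unfold cellAffine; fun_prop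

theorem cell_intervalIntegrable {N : ℕ} (hN : 1 ≤ N) (f : ℤ → ℂ) (k n : ℤ) :
    IntervalIntegrable (fun x => interp N f x * eI (-(x * k))) volume
      (msh N * n) (msh N * n + msh N) := by
  have c := continuous_eI
  have c' := continuous_cellAffine N f n
  have hc : Continuous fun x : ℝ => cellAffine N f n x * eI (-(x * k)) := by fun_prop
  refine (hc.intervalIntegrable _ _).congr_uIoo fun x hx => ?_
  rw [Set.uIoo_of_le (by linarith [msh_pos hN])] at hx
  simp only [interp_eq_cellAffine hN f n hx]

theorem cell_integral {N : ℕ} (hN : 1 ≤ N) (f : ℤ → ℂ) (k n : ℤ) :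
    ∫ x in (msh N * n)..(msh N * n + msh N), interp N f x * eI (-(x * k)) =
      (msh N : ℂ) *
        (modeTerm N f k n * (∫ t in (0 : ℝ)..1, ((1 - t : ℝ) : ℂ) * eI (-(msh N * k * t))) +
          modeTerm N f k (n + 1) * ∫ t in (0 : ℝ)..1, (t : ℂ) * eI (msh N * k * (1 - t))) := by
  have h := msh_pos hN
  have c := continuous_eI
  rw [intervalIntegral.integral_congr_Ioo_of_le
    (g := fun x : ℝ => cellAffine N f n x * eI (-(x * k))) (by linarith)
    (fun x hx => by simp only [interp_eq_cellAffine hN f n hx])]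
  have hs := intervalIntegral.smul_integral_comp_add_mul (a := 0) (b := 1)
    (fun x : ℝ => cellAffine N f n x * eI (-(x * k))) (msh N) (msh N * n)
  rw [mul_zero, add_zero, mul_one] at hs
  rw [← hs, Complex.real_smul, ← intervalIntegral.integral_const_mul (modeTerm N f k n),
    ← intervalIntegral.integral_const_mul (modeTerm N f k (n + 1)),
    ← intervalIntegral.integral_add]
  · congr 2; ext t
    -- The same phase, referred to the left endpoint in `e1` and to the right one in `e2`.
    have e1 : eI (-((msh N * n + msh N * t) * k)) =
        eI (-(msh N * n * k)) * eI (-(msh N * k * t)) := by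
      rw [← eI_add]; congr 1; ring
    have e2 : eI (-((msh N * n + msh N * t) * k)) =
        eI (-(msh N * ((n + 1 : ℤ) : ℝ) * k)) * eI (msh N * k * (1 - t)) := by
      rw [← eI_add]; congr 1; push_cast; ring
    have e3 : ((msh N * n + msh N * t - msh N * n) / msh N : ℝ) = t := by
      field_simp; ring
    have e4 : cellAffine N f n (msh N * n + msh N * t) =
        f (red N n) * ((1 - t : ℝ) : ℂ) + f (red N (n + 1)) * (t : ℂ) := by
      rw [cellAffine, e3]; push_cast; ring
    rw [e4, add_mul]
    nth_rewrite 1 [e1]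
    rw [e2, modeTerm, modeTerm]
    ring
  all_goals exact Continuous.intervalIntegrable (by fun_prop) _ _

/-- On the Fourier side, linear interpolation is multiplication by `tentSymb (hk)`. -/
theorem tF_interp {N : ℕ} (hN : 1 ≤ N) (f : ℤ → ℂ) (k : ℤ) :
    tF (interp N f) k = (tentSymb (msh N * k) : ℂ) * dF N f k := by
  have hsum : ∫ x in (-π)..π, interp N f x * eI (-(x * k)) =
      ∑ n ∈ dual N, ∫ x in (msh N * n)..(msh N * n + msh N), interp N f x * eI (-(x * k)) := by
    rw [sum_dual_eq_range N
      fun n => ∫ x in (msh N * n)..(msh N * n + msh N), interp N f x * eI (-(x * k))]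
    have e : ∀ j : ℕ, msh N * (((j : ℤ) - N : ℤ) : ℝ) + msh N =
        msh N * ((((j + 1 : ℕ) : ℤ) - N : ℤ) : ℝ) := fun j => by push_cast; ring
    have hadj := intervalIntegral.sum_integral_adjacent_intervals
      (f := fun x => interp N f x * eI (-(x * k))) (μ := volume)
      (a := fun j : ℕ => msh N * (((j : ℤ) - N : ℤ) : ℝ)) (n := 2 * N)
      (fun j _ => by rw [← e]; exact cell_intervalIntegrable hN f k _)
    simp only [e]
    rw [hadj]
    congr 1 <;> rw [← msh_mul hN] <;> push_cast <;> ring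
  have hdF : ∑ n ∈ dual N, f n * eI (-(msh N * n * k)) = ∑ n ∈ dual N, modeTerm N f k n :=
    Finset.sum_congr rfl fun n hn => by rw [modeTerm, red_eq_self hn]
  rw [tF, dF, hdF, hsum]
  simp only [cell_integral hN]
  rw [← Finset.mul_sum, Finset.sum_add_distrib, ← Finset.sum_mul, ← Finset.sum_mul,
    sum_dual_shift (modeTerm_add_period hN f k), ← mul_add, half_tents_add]
  push_cast; ring

theorem interp_coeff_error {s : ℝ} (hs0 : 0 ≤ s) (hs2 : s ≤ 2) {N : ℕ} (hN : 1 ≤ N)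
    (f : ℤ → ℂ) (k : ℤ) :
    ‖tF (interp N f) k - dF N f k‖ ^ 2 ≤
      (4 * msh N ^ s) ^ 2 * ((1 + (k : ℝ) ^ 2) ^ s * ‖dF N f k‖ ^ 2) := by
  have h := msh_pos hN
  have hk : (|(k : ℝ)| ^ s) ^ 2 ≤ (1 + (k : ℝ) ^ 2) ^ s := by
    rw [Real.rpow_pow_comm (abs_nonneg _), sq_abs]
    exact Real.rpow_le_rpow (sq_nonneg _) (by linarith) hs0
  have hθ : |msh N * k| ^ s = msh N ^ s * |(k : ℝ)| ^ s := by
    rw [abs_mul, abs_of_pos h, Real.mul_rpow h.le (abs_nonneg _)]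
  have hm := abs_tentSymb_sub_one_le_rpow hs0 hs2 (msh N * k)
  rw [hθ] at hm
  have e : tF (interp N f) k - dF N f k =
      ((tentSymb (msh N * k) - 1 : ℝ) : ℂ) * dF N f k := by
    rw [tF_interp hN]; push_cast; ring
  rw [e, norm_mul, Complex.norm_real, Real.norm_eq_abs]
  calc (|tentSymb (msh N * k) - 1| * ‖dF N f k‖) ^ 2
      ≤ (4 * (msh N ^ s * |(k : ℝ)| ^ s) * ‖dF N f k‖) ^ 2 := by gcongr
    _ = (4 * msh N ^ s) ^ 2 * ((|(k : ℝ)| ^ s) ^ 2 * ‖dF N f k‖ ^ 2) := by ring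
    _ ≤ _ := by gcongr

/-- the Fourier coefficients of the linear interpolation are close, on the
window `(𝕋_h)*`, to the discrete Fourier coefficients. -/
theorem interp_fourier_close (s : ℝ) (hs0 : 0 ≤ s) (hs2 : s ≤ 2) :
    ∃ C : ℝ, 0 < C ∧ ∀ N : ℕ, 1 ≤ N → msh N ≤ 1 → ∀ f : ℤ → ℝ,
      Real.sqrt (∑ k ∈ dual N, ‖tF (interp N (cf f)) k - dF N (cf f) k‖ ^ 2)
        ≤ C * msh N ^ s * Hs N s (cf f) := by
  refine ⟨4, by norm_num, fun N hN _ f => ?_⟩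
  have hpos : 0 ≤ 4 * msh N ^ s := mul_nonneg (by norm_num) (Real.rpow_nonneg (msh_pos hN).le s)
  refine Real.sqrt_le_iff.mpr ⟨mul_nonneg hpos (Real.sqrt_nonneg _), ?_⟩
  rw [mul_pow, Hs, Real.sq_sqrt (Finset.sum_nonneg fun k _ => by positivity), Finset.mul_sum]
  exact Finset.sum_le_sum fun k _ => interp_coeff_error hs0 hs2 hN (cf f) k

end FPU

end
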